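/- arXiv:1007.3467 — 2 statements merged into one kernel-verified Lean document; each statement's English description precedes it below -/
import Mathlib

section
/- Let σ and τ be Strang canonical permutations of {1,…,n} such that for every index i, σ(i) − i and τ(i) − i have the same sign (both positive, both negative, or both zero), and for every index j, σ⁻¹(j) − j and τ⁻¹(j) − j have the same sign. Then σ = τ. (A Strang canonical permutation matrix is uniquely determined by the signs of its rows and columns.) -/
/-- The bandwidth of a permutation `σ` of `{0,…,n-1}`: `max_i |σ(i) - i|`. -/
def bandwidth {n : ℕ} (σ : Equiv.Perm (Fin n)) : ℕ :=
  Finset.univ.sup fun i : Fin n => ((σ i : ℤ) - (i : ℤ)).natAbs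

/-- `c` is a cut point of `σ` if `σ` maps the initial segment `{0,…,c}` onto itself. -/
def IsCutPoint {n : ℕ} (σ : Equiv.Perm (Fin n)) (c : Fin n) : Prop :=
  ∀ j : Fin n, j ≤ c → σ j ≤ c

/-- Indices `i ≤ j` lie in the same section of `σ` if there is no cut point `c`
with `i ≤ c < j`. -/
def SameSection {n : ℕ} (σ : Equiv.Perm (Fin n)) (i j : Fin n) : Prop :=
  i ≤ j ∧ ∀ c : Fin n, i ≤ c → c < j → ¬ IsCutPoint σ c

/-- Unordered version of `SameSection`. -/
def InSameSection {n : ℕ} (σ : Equiv.Perm (Fin n)) (i j : Fin n) : Prop :=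
  SameSection σ i j ∨ SameSection σ j i

/-- `σ` is upper-canonical: for `i < j` with `σ(i) > i` and `σ(j) > j`, `σ(i) < σ(j)`. -/
def UpperCanonical {n : ℕ} (σ : Equiv.Perm (Fin n)) : Prop :=
  ∀ i j : Fin n, i < j → i < σ i → j < σ j → σ i < σ j

/-- `σ` is lower-canonical: for `i < j` with `σ(i) < i` and `σ(j) < j`, `σ(i) < σ(j)`. -/
def LowerCanonical {n : ℕ} (σ : Equiv.Perm (Fin n)) : Prop :=
  ∀ i j : Fin n, i < j → σ i < i → σ j < j → σ i < σ j

/-- `σ` is Strang canonical if it is both upper- and lower-canonical. -/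
def StrangCanonical {n : ℕ} (σ : Equiv.Perm (Fin n)) : Prop :=
  UpperCanonical σ ∧ LowerCanonical σ

/-- `σ` is row-settled: no indices `i < j` in the same section
with `σ(i) < i` (negative row) and `σ(j) > j` (positive row). -/
def RowSettled {n : ℕ} (σ : Equiv.Perm (Fin n)) : Prop :=
  ∀ i j : Fin n, i < j → SameSection σ i j → ¬ (σ i < i ∧ j < σ j)

/-- `σ` is settled if it is row-settled or column-settled
(column-settled means `σ⁻¹` is row-settled). -/
def Settled {n : ℕ} (σ : Equiv.Perm (Fin n)) : Prop :=
  RowSettled σ ∨ RowSettled σ⁻¹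

/-- The reducing permutation of `σ`: the product of the (pairwise disjoint)
transpositions `(i, i+1)` over all `i` with `σ(i) > i` and `σ(i+1) < i+1`. -/
def reducingPerm {n : ℕ} (σ : Equiv.Perm (Fin n)) : Equiv.Perm (Fin n) :=
  ((List.finRange n).filterMap fun i : Fin n =>
    if h : (i : ℕ) + 1 < n then
      let j : Fin n := ⟨(i : ℕ) + 1, h⟩
      if i < σ i ∧ σ j < j then some (Equiv.swap i j) else none
    else none).prod

/-- The reduction of `σ` is `σ` composed with its reducing permutation. -/
def reduction {n : ℕ} (σ : Equiv.Perm (Fin n)) : Equiv.Perm (Fin n) :=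
  σ * reducingPerm σ

/-- A bubblesort step for `σ`: a nonidentity permutation `t` that is a product of
pairwise disjoint adjacent transpositions `(i, i+1)`, each satisfying `σ(i) > σ(i+1)`. -/
def IsBubbleStep {n : ℕ} (σ t : Equiv.Perm (Fin n)) : Prop :=
  t ≠ 1 ∧ ∃ l : List (Fin n),
    l.Pairwise (fun i j => (i : ℕ) + 2 ≤ (j : ℕ)) ∧
    (∀ i ∈ l, ∃ h : (i : ℕ) + 1 < n, σ ⟨(i : ℕ) + 1, h⟩ < σ i) ∧
    t = (l.map fun i : Fin n =>
      (if h : (i : ℕ) + 1 < n then Equiv.swap i ⟨(i : ℕ) + 1, h⟩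
       else 1 : Equiv.Perm (Fin n))).prod

/-- The number of inversions of `σ`: pairs `i < j` with `σ(i) > σ(j)`. -/
def inversions {n : ℕ} (σ : Equiv.Perm (Fin n)) : ℕ :=
  (Finset.univ.filter fun p : Fin n × Fin n => p.1 < p.2 ∧ σ p.2 < σ p.1).card

/-- The cyclic shift by `s` on `{0,…,n-1}`: `i ↦ (i + s) mod n`. -/
def cyclicShift (n s : ℕ) : Equiv.Perm (Fin n) := (finRotate n) ^ s

/-! A strictly monotone function on a well-ordered set is determined by its image. A Strang
canonical `σ` is strictly monotone on the rows `i` with `i < σ i`, and it maps this set of rows onto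
the set of columns `j` with `σ⁻¹ j < j`; so the signs determine `σ` on these rows, and likewise on
the rows with `σ i < i`. The remaining rows are fixed points. -/

theorem eqOn_of_strictMonoOn_of_image_eq {α β : Type*} [LinearOrder α] [WellFoundedLT α]
    [Preorder β] {f g : α → β} {s : Set α}
    (hf : StrictMonoOn f s) (hg : StrictMonoOn g s) (himage : f '' s = g '' s) : s.EqOn f g := by
  rw [← Set.domRestrict_eq_domRestrict_iff, ← hf.domRestrict.range_inj hg.domRestrict,
    Set.range_domRestrict, Set.range_domRestrict, himage]

theorem image_setOfPred_rel_apply {α β : Type*} (e : α ≃ β) (r : α → β → Prop) :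
    e '' {i | r i (e i)} = {j | r (e.symm j) j} := by
  simp only [e.image_eq_preimage_symm, Set.preimage_ofPred_eq, e.apply_symm_apply]

theorem eqOn_of_strictMonoOn_of_rel_iff {α β : Type*} [LinearOrder α] [WellFoundedLT α]
    [Preorder β] {e f : α ≃ β} (r : α → β → Prop)
    (he : StrictMonoOn e {i | r i (e i)}) (hf : StrictMonoOn f {i | r i (f i)})
    (hrow : ∀ i, r i (e i) ↔ r i (f i)) (hcol : ∀ j, r (e.symm j) j ↔ r (f.symm j) j) :
    {i | r i (e i)}.EqOn e f := by
  have hrows : {i | r i (e i)} = {i | r i (f i)} := Set.ext hrow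
  refine eqOn_of_strictMonoOn_of_image_eq he (hrows ▸ hf) ?_
  calc e '' {i | r i (e i)} = {j | r (e.symm j) j} := image_setOfPred_rel_apply e r
    _ = {j | r (f.symm j) j} := Set.ext hcol
    _ = f '' {i | r i (f i)} := (image_setOfPred_rel_apply f r).symm
    _ = f '' {i | r i (e i)} := by rw [hrows]

theorem stmt_15_general {α : Type*} [LinearOrder α] [WellFoundedLT α] {σ τ : Equiv.Perm α}
    (hσ_upper : StrictMonoOn σ {i | i < σ i}) (hσ_lower : StrictMonoOn σ {i | σ i < i})
    (hτ_upper : StrictMonoOn τ {i | i < τ i}) (hτ_lower : StrictMonoOn τ {i | τ i < i})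
    (hrow : ∀ i, cmp (σ i) i = cmp (τ i) i) (hcol : ∀ j, cmp (σ⁻¹ j) j = cmp (τ⁻¹ j) j) :
    σ = τ := by
  ext i
  obtain hlt | hfixed | hgt := lt_trichotomy (σ i) i
  · exact eqOn_of_strictMonoOn_of_rel_iff (· > ·) hσ_lower hτ_lower
      (fun i => lt_iff_lt_of_cmp_eq_cmp (hrow i))
      (fun j => lt_iff_lt_of_cmp_eq_cmp (cmp_eq_cmp_symm.1 (hcol j))) hlt
  · exact hfixed.trans ((eq_iff_eq_of_cmp_eq_cmp (hrow i)).1 hfixed).symm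
  · exact eqOn_of_strictMonoOn_of_rel_iff (· < ·) hσ_upper hτ_upper
      (fun i => lt_iff_lt_of_cmp_eq_cmp (cmp_eq_cmp_symm.1 (hrow i)))
      (fun j => lt_iff_lt_of_cmp_eq_cmp (hcol j)) hgt

theorem upperCanonical_iff_strictMonoOn {n : ℕ} {σ : Equiv.Perm (Fin n)} :
    UpperCanonical σ ↔ StrictMonoOn σ {i | i < σ i} :=
  ⟨fun h _ hi _ hj hij => h _ _ hij hi hj, fun h _ _ hij hi hj => h hi hj hij⟩

theorem lowerCanonical_iff_strictMonoOn {n : ℕ} {σ : Equiv.Perm (Fin n)} :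
    LowerCanonical σ ↔ StrictMonoOn σ {i | σ i < i} :=
  ⟨fun h _ hi _ hj hij => h _ _ hij hi hj, fun h _ _ hij hi hj => h hi hj hij⟩

theorem cmp_sign_sub_zero (a b : ℤ) : cmp (a - b).sign 0 = cmp a b := by
  rw [← cmp_sub_zero a b]
  simp only [cmp, cmpUsing, Int.sign_neg_iff, Int.sign_pos_iff]

theorem cmp_intCast_fin {n : ℕ} (i j : Fin n) : cmp (i : ℤ) (j : ℤ) = cmp i j :=
  (Nat.strictMono_cast.comp Fin.val_strictMono).cmp_map_eq i j

/-- A Strang canonical permutation is uniquely determined by the signs of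
its rows (`σ(i) - i`) and its columns (`σ⁻¹(j) - j`). -/
theorem stmt_15 (n : ℕ) (σ τ : Equiv.Perm (Fin n))
    (hσ : StrangCanonical σ) (hτ : StrangCanonical τ)
    (hrow : ∀ i : Fin n, ((σ i : ℤ) - (i : ℤ)).sign = ((τ i : ℤ) - (i : ℤ)).sign)
    (hcol : ∀ j : Fin n, ((σ⁻¹ j : ℤ) - (j : ℤ)).sign = ((τ⁻¹ j : ℤ) - (j : ℤ)).sign) :
    σ = τ := by
  obtain ⟨hσ_upper, hσ_lower⟩ := hσ
  obtain ⟨hτ_upper, hτ_lower⟩ := hτ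
  rw [upperCanonical_iff_strictMonoOn] at hσ_upper hτ_upper
  rw [lowerCanonical_iff_strictMonoOn] at hσ_lower hτ_lower
  refine stmt_15_general hσ_upper hσ_lower hτ_upper hτ_lower (fun i => ?_) (fun j => ?_)
  · simpa only [cmp_sign_sub_zero, cmp_intCast_fin] using congrArg (cmp · 0) (hrow i)
  · simpa only [cmp_sign_sub_zero, cmp_intCast_fin] using congrArg (cmp · 0) (hcol j)
end

section
/- Let σ be a permutation of {1,…,n}, let t be a bubblesort step for σ, and set τ = σ ∘ t. Then Σ_i |τ(i) − i| ≤ Σ_i |σ(i) − i|, max_i |τ(i) − i| ≤ max_i |σ(i) − i|, and Σ_i (τ(i) − i)² < Σ_i (σ(i) − i)². (Under a parallel bubblesort iteration, the ℓ¹ and ℓ∞ norms of the displacement vector are nonincreasing and the ℓ² norm strictly decreases.) -/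
/-! Exchanging an inversion `i < j`, `σ j < σ i` replaces the displacements `σ i - i` and `σ j - j`
by `σ j - i` and `σ i - j`, which have the same sum and lie strictly between the two old ones.
So all displacements stay in any interval that contained them, and `∑ k, φ (σ k - k)` cannot
increase for convex `φ` and strictly decreases for strictly convex `φ`; take `φ x = |x|` and
`φ x = x ^ 2`. A bubblesort step is a nonempty sequence of such exchanges. -/

open Equiv Finset

theorem smul_add_smul_swap_of_add_eq_one {R M : Type*} [Semiring R] [AddCommMonoid M] [Module R M]
    {a b : R} (hab : a + b = 1) (x y : M) : (a • x + b • y) + (b • x + a • y) = x + y := by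
  rw [add_add_add_comm, ← add_smul, ← add_smul, add_comm b a, hab, one_smul, one_smul]

section Convexity

variable {𝕜 E β : Type*} [Semiring 𝕜] [PartialOrder 𝕜] [AddCommGroup E] [Module 𝕜 E]
  [AddCommMonoid β] [PartialOrder β] [Module 𝕜 β] {s : Set E} {φ : E → β} {x y u v : E}

theorem convexOn_add_le_add_of_mem_segment [IsOrderedAddMonoid β] (hφ : ConvexOn 𝕜 s φ)
    (hx : x ∈ s) (hy : y ∈ s) (hu : u ∈ segment 𝕜 x y) (huv : u + v = x + y) :
    φ u + φ v ≤ φ x + φ y := by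
  obtain ⟨a, b, ha, hb, hab, rfl⟩ := hu
  obtain rfl : v = b • x + a • y :=
    add_left_cancel (huv.trans (smul_add_smul_swap_of_add_eq_one hab x y).symm)
  rw [← smul_add_smul_swap_of_add_eq_one hab (φ x) (φ y)]
  exact add_le_add (hφ.2 hx hy ha hb hab) (hφ.2 hx hy hb ha (by rwa [add_comm]))

theorem strictConvexOn_add_lt_add_of_mem_openSegment [IsOrderedCancelAddMonoid β]
    (hφ : StrictConvexOn 𝕜 s φ) (hx : x ∈ s) (hy : y ∈ s) (hxy : x ≠ y)
    (hu : u ∈ openSegment 𝕜 x y) (huv : u + v = x + y) :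
    φ u + φ v < φ x + φ y := by
  obtain ⟨a, b, ha, hb, hab, rfl⟩ := hu
  obtain rfl : v = b • x + a • y :=
    add_left_cancel (huv.trans (smul_add_smul_swap_of_add_eq_one hab x y).symm)
  rw [← smul_add_smul_swap_of_add_eq_one hab (φ x) (φ y)]
  exact add_lt_add (hφ.2 hx hy hxy ha hb hab) (hφ.2 hx hy hxy hb ha (by rwa [add_comm]))

end Convexity

section Exchange

theorem sum_comp_swap_add {ι α β : Type*} [Fintype ι] [DecidableEq ι] [AddCommMonoid β]
    (c : ι → α → β) (f : ι → α) (i j : ι) :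
    ∑ k, c k (f (swap i j k)) + (c i (f i) + c j (f j)) =
      ∑ k, c k (f k) + (c i (f j) + c j (f i)) := by
  rcases eq_or_ne i j with rfl | hij
  · simp
  have hrest : ∑ k ∈ {i, j}ᶜ, c k (f (swap i j k)) = ∑ k ∈ {i, j}ᶜ, c k (f k) := by
    refine sum_congr rfl fun k hk => ?_
    simp only [mem_compl, mem_insert, mem_singleton, not_or] at hk
    rw [swap_apply_of_ne_of_ne hk.1 hk.2]
  rw [← sum_add_sum_compl {i, j}, ← sum_add_sum_compl {i, j} fun k => c k (f k), hrest,
    sum_pair hij, sum_pair hij, swap_apply_left, swap_apply_right]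
  abel

variable {ι 𝕜 β : Type*} [Fintype ι] [DecidableEq ι]
  [Field 𝕜] [LinearOrder 𝕜] [IsStrictOrderedRing 𝕜]
  [AddCommMonoid β] [PartialOrder β] [IsOrderedCancelAddMonoid β] [Module 𝕜 β]
  {φ : 𝕜 → β} {p f : ι → 𝕜} {i j : ι}

theorem sum_comp_swap_sub_le (hφ : ConvexOn 𝕜 Set.univ φ) (hp : p i ≤ p j) (hf : f j ≤ f i) :
    ∑ k, φ (f (swap i j k) - p k) ≤ ∑ k, φ (f k - p k) := by
  have hpair : φ (f j - p i) + φ (f i - p j) ≤ φ (f j - p j) + φ (f i - p i) := by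
    refine convexOn_add_le_add_of_mem_segment hφ trivial trivial ?_ (by ring)
    rw [segment_eq_Icc (by linarith)]
    constructor <;> linarith
  refine le_of_add_le_add_right (a := φ (f i - p i) + φ (f j - p j)) ?_
  rw [sum_comp_swap_add (fun k y => φ (y - p k)), add_comm (φ (f i - p i))]
  gcongr

theorem sum_comp_swap_sub_lt (hφ : StrictConvexOn 𝕜 Set.univ φ) (hp : p i < p j)
    (hf : f j < f i) :
    ∑ k, φ (f (swap i j k) - p k) < ∑ k, φ (f k - p k) := by
  have hpair : φ (f j - p i) + φ (f i - p j) < φ (f j - p j) + φ (f i - p i) := by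
    have hends : f j - p j < f i - p i := by linarith
    refine strictConvexOn_add_lt_add_of_mem_openSegment hφ trivial trivial hends.ne ?_ (by ring)
    rw [openSegment_eq_Ioo hends]
    constructor <;> linarith
  refine lt_of_add_lt_add_right (a := φ (f i - p i) + φ (f j - p j)) ?_
  rw [sum_comp_swap_add (fun k y => φ (y - p k)), add_comm (φ (f i - p i))]
  gcongr

end Exchange

/-- The strict Bruhat order on the permutations of a linear order: `BruhatLT τ σ` means that `τ`
arises from `σ` by one or more exchanges `σ ↦ σ * swap i j`, each removing an inversion `(i, j)`.
The two positions need not be adjacent. -/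
inductive BruhatLT {ι : Type*} [LinearOrder ι] : Perm ι → Perm ι → Prop
  | mul_swap {σ : Perm ι} {i j : ι} (hij : i < j) (hσ : σ j < σ i) : BruhatLT (σ * swap i j) σ
  | trans {ρ τ σ : Perm ι} : BruhatLT ρ τ → BruhatLT τ σ → BruhatLT ρ σ

namespace BruhatLT

section Displacement

variable {ι 𝕜 β : Type*} [LinearOrder ι] [Fintype ι]
  [Field 𝕜] [LinearOrder 𝕜] [IsStrictOrderedRing 𝕜]
  [AddCommMonoid β] [PartialOrder β] [IsOrderedCancelAddMonoid β] [Module 𝕜 β]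
  {φ : 𝕜 → β} {p : ι → 𝕜} {σ τ : Perm ι}

theorem sum_displacement_le (h : BruhatLT τ σ) (hφ : ConvexOn 𝕜 Set.univ φ) (hp : Monotone p) :
    ∑ k, φ (p (τ k) - p k) ≤ ∑ k, φ (p (σ k) - p k) := by
  induction h with
  | @mul_swap σ i j hij hσ =>
    exact sum_comp_swap_sub_le (f := p ∘ σ) hφ (hp hij.le) (hp hσ.le)
  | trans _ _ h₁ h₂ => exact h₁.trans h₂

theorem sum_displacement_lt (h : BruhatLT τ σ) (hφ : StrictConvexOn 𝕜 Set.univ φ)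
    (hp : StrictMono p) :
    ∑ k, φ (p (τ k) - p k) < ∑ k, φ (p (σ k) - p k) := by
  induction h with
  | @mul_swap σ i j hij hσ => exact sum_comp_swap_sub_lt (f := p ∘ σ) hφ (hp hij) (hp hσ)
  | trans _ _ h₁ h₂ => exact h₁.trans h₂

end Displacement

theorem displacement_mem {ι G : Type*} [LinearOrder ι] [AddCommGroup G] [PartialOrder G]
    [IsOrderedAddMonoid G] {σ τ : Perm ι} {p : ι → G} {s : Set G} (h : BruhatLT τ σ)
    (hp : Monotone p) (hs : s.OrdConnected) (hσ : ∀ k, p (σ k) - p k ∈ s) (k : ι) :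
    p (τ k) - p k ∈ s := by
  induction h generalizing k with
  | @mul_swap σ i j hij hinv =>
    rw [Perm.mul_apply]
    rcases eq_or_ne k i with rfl | hki
    · rw [swap_apply_left]
      exact hs.out (hσ j) (hσ k)
        ⟨sub_le_sub_left (hp hij.le) _, sub_le_sub_right (hp hinv.le) _⟩
    rcases eq_or_ne k j with rfl | hkj
    · rw [swap_apply_right]
      exact hs.out (hσ k) (hσ i)
        ⟨sub_le_sub_right (hp hinv.le) _, sub_le_sub_left (hp hij.le) _⟩
    rw [swap_apply_of_ne_of_ne hki hkj]
    exact hσ k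
  | trans _ _ hρτ hτσ => exact hρτ (hτσ hσ) k

end BruhatLT

theorem bandwidth_le_iff {n B : ℕ} {σ : Perm (Fin n)} :
    bandwidth σ ≤ B ↔ ∀ k, (σ k : ℤ) - (k : ℤ) ∈ Set.Icc (-B : ℤ) B := by
  simp only [bandwidth, Finset.sup_le_iff, mem_univ, true_imp_iff, Set.mem_Icc]
  exact forall_congr' fun k => by omega

/-- The transposition `(i, i+1)`, read as the identity when `i` is the last index; this is the
factor attached to `i` in `IsBubbleStep`. -/
def adjacentSwap {n : ℕ} (i : Fin n) : Perm (Fin n) :=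
  if h : (i : ℕ) + 1 < n then swap i ⟨(i : ℕ) + 1, h⟩ else 1

theorem adjacentSwap_apply_of_lt {n : ℕ} {i k : Fin n} (hik : (i : ℕ) + 1 < k) :
    adjacentSwap i k = k := by
  rw [adjacentSwap, dif_pos (hik.trans k.isLt)]
  exact swap_apply_of_ne_of_ne (Fin.ne_of_val_ne (by omega)) (Fin.ne_of_val_ne hik.ne')

theorem bruhatLT_mul_prod_adjacentSwap {n : ℕ} {l : List (Fin n)} (hne : l ≠ [])
    (hl : l.Pairwise fun i j : Fin n => (i : ℕ) + 2 ≤ j) {σ : Perm (Fin n)}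
    (hσ : ∀ i ∈ l, ∃ h : (i : ℕ) + 1 < n, σ ⟨(i : ℕ) + 1, h⟩ < σ i) :
    BruhatLT (σ * (l.map adjacentSwap).prod) σ := by
  induction l generalizing σ with
  | nil => exact absurd rfl hne
  | cons a l ih =>
    obtain ⟨hfar, hl⟩ := List.pairwise_cons.1 hl
    obtain ⟨ha, hdesc⟩ := hσ a List.mem_cons_self
    have hfirst : BruhatLT (σ * adjacentSwap a) σ := by
      rw [adjacentSwap, dif_pos ha]
      exact .mul_swap (Fin.lt_def.2 (Nat.lt_succ_self _)) hdesc
    rw [List.map_cons, List.prod_cons, ← mul_assoc]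
    rcases eq_or_ne l [] with rfl | hne'
    · simpa using hfirst
    refine (ih hne' hl fun i hi => ?_).trans hfirst
    obtain ⟨hi', hlt⟩ := hσ i (List.mem_cons_of_mem a hi)
    have hai := hfar i hi
    refine ⟨hi', ?_⟩
    rwa [Perm.mul_apply, Perm.mul_apply, adjacentSwap_apply_of_lt (by simp only; omega),
      adjacentSwap_apply_of_lt (by omega)]

theorem IsBubbleStep.bruhatLT {n : ℕ} {σ t : Perm (Fin n)} (ht : IsBubbleStep σ t) :
    BruhatLT (σ * t) σ := by
  obtain ⟨ht_ne, l, hl, hσ, rfl⟩ := ht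
  refine bruhatLT_mul_prod_adjacentSwap ?_ ?_ hσ
  · rintro rfl
    exact ht_ne rfl
  · -- `IsBubbleStep` states the separation for the list of the underlying natural numbers.
    simpa [List.pairwise_map, ← List.map_eq_flatMap] using hl

theorem stmt_17_general {n : ℕ} {σ τ : Perm (Fin n)} (h : BruhatLT τ σ) :
    (∑ i : Fin n, |(τ i : ℤ) - (i : ℤ)| ≤ ∑ i : Fin n, |(σ i : ℤ) - (i : ℤ)|) ∧
    bandwidth τ ≤ bandwidth σ ∧
    (∑ i : Fin n, ((τ i : ℤ) - (i : ℤ)) ^ 2 < ∑ i : Fin n, ((σ i : ℤ) - (i : ℤ)) ^ 2) := by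
  have hp : StrictMono fun i : Fin n => ((i : ℕ) : ℝ) :=
    Nat.strictMono_cast.comp Fin.val_strictMono
  refine ⟨?_, ?_, ?_⟩
  · have hl1 := h.sum_displacement_le convexOn_univ_norm hp.monotone
    simp only [Real.norm_eq_abs] at hl1
    exact_mod_cast hl1
  · have hpℤ : Monotone fun i : Fin n => ((i : ℕ) : ℤ) :=
      Nat.mono_cast.comp Fin.val_strictMono.monotone
    exact bandwidth_le_iff.2
      (h.displacement_mem hpℤ Set.ordConnected_Icc (bandwidth_le_iff.1 le_rfl))
  · exact_mod_cast h.sum_displacement_lt (even_two.strictConvexOn_pow two_ne_zero) hp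

/-- Under a bubblesort step, the ℓ¹ and ℓ∞ norms of the displacement vector
do not increase, and the ℓ² norm strictly decreases. -/
theorem stmt_17 (n : ℕ) (σ t : Equiv.Perm (Fin n)) (ht : IsBubbleStep σ t) :
    (∑ i : Fin n, |((σ * t) i : ℤ) - (i : ℤ)| ≤ ∑ i : Fin n, |(σ i : ℤ) - (i : ℤ)|) ∧
    bandwidth (σ * t) ≤ bandwidth σ ∧
    (∑ i : Fin n, (((σ * t) i : ℤ) - (i : ℤ)) ^ 2 < ∑ i : Fin n, ((σ i : ℤ) - (i : ℤ)) ^ 2) :=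
  stmt_17_general ht.bruhatLT
end
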